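/- arXiv:2301.11795 — 5 statements merged into one kernel-verified Lean document; each statement's English description precedes it below -/
import Mathlib

section
/- Let 2 ≤ p < ∞. Then for every ξ, η ∈ ℝⁿ it holds that ⟨H_{p−1}(ξ) − H_{p−1}(η), ξ − η⟩ ≥ (4/p²) |H_{p/2}(ξ) − H_{p/2}(η)|². -/
open scoped RealInnerProductSpace

/-- `Hmap lam ξ = (|ξ| − 1)₊^lam • ξ/|ξ|` for `ξ ≠ 0`, and `Hmap lam 0 = 0`. -/
noncomputable def Hmap {n : ℕ} (lam : ℝ) (ξ : EuclideanSpace ℝ (Fin n)) :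
    EuclideanSpace ℝ (Fin n) :=
  open Classical in
  if ξ = (0 : EuclideanSpace ℝ (Fin n)) then 0
  else (max (‖ξ‖ - 1) 0) ^ lam • ‖ξ‖⁻¹ • ξ

/-!
For radial maps `F(ξ) = f(|ξ|) ξ/|ξ|` and `G(ξ) = g(|ξ|) ξ/|ξ|`, both sides of
`k |F(ξ) - F(η)|² ≤ ⟨G(ξ) - G(η), ξ - η⟩` are affine in the cosine of the angle between `ξ` and `η`,
so it suffices to treat parallel and antiparallel vectors. With `a = (|ξ| - 1)₊` and
`b = (|η| - 1)₊`, the parallel case rests on the Cauchy–Schwarz inequality for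
`a ^ (p/2) - b ^ (p/2) = (p/2) ∫ t ^ (p/2 - 1) dt`, which gives the constant `4 (p - 1) / p²`; the
antiparallel case is the discrete Cauchy–Schwarz inequality with two terms. Replacing `a ± b` by
`|ξ| ± |η|` only enlarges the right-hand side.
-/

section RealInequalities

theorem sq_sub_le_mul_sub_of_sq_hasDerivWithinAt_le {D : Set ℝ} (hD : Convex ℝ D)
    {f g f' g' : ℝ → ℝ} (hf : ContinuousOn f D) (hg : ContinuousOn g D)
    (hf' : ∀ t ∈ interior D, HasDerivWithinAt f (f' t) (interior D) t)
    (hg' : ∀ t ∈ interior D, HasDerivWithinAt g (g' t) (interior D) t)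
    (hle : ∀ t ∈ interior D, f' t ^ 2 ≤ g' t) {a b : ℝ} (ha : a ∈ D) (hb : b ∈ D) :
    (f a - f b) ^ 2 ≤ (g a - g b) * (a - b) := by
  wlog hba : b ≤ a generalizing a b
  · linarith [this hb ha (le_of_not_ge hba)]
  -- The derivative is at least `(c - f' t) ^ 2`; the increment is a quadratic polynomial in `c`.
  have hmono (c : ℝ) : MonotoneOn (fun t ↦ c ^ 2 * t - 2 * c * f t + g t) D := by
    refine monotoneOn_of_hasDerivWithinAt_nonneg hD
      (f' := fun t ↦ c ^ 2 * 1 - 2 * c * f' t + g' t) (by fun_prop) (fun t ht ↦ ?_) fun t ht ↦ ?_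
    · exact (((hasDerivWithinAt_id t _).const_mul _).sub ((hf' t ht).const_mul _)).add (hg' t ht)
    · nlinarith [sq_nonneg (c - f' t), hle t ht]
  have hdiscrim : discrim (a - b) (-(2 * (f a - f b))) (g a - g b) ≤ 0 :=
    discrim_le_zero fun c ↦ by linarith [hmono c hb ha hba]
  rw [discrim] at hdiscrim
  linarith

variable {p a b : ℝ}

theorem sq_rpow (ha : 0 ≤ a) (q : ℝ) : (a ^ q) ^ 2 = a ^ (2 * q) := by
  rw [← Real.rpow_mul_natCast ha, mul_comm, Nat.cast_ofNat]

theorem four_mul_sub_one_div_sq_mul_sq_rpow_sub_le (hp : 1 < p) (ha : 0 ≤ a) (hb : 0 ≤ b) :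
    4 * (p - 1) / p ^ 2 * (a ^ (p / 2) - b ^ (p / 2)) ^ 2 ≤
      (a ^ (p - 1) - b ^ (p - 1)) * (a - b) := by
  have hp₁ : 0 < p - 1 := sub_pos.2 hp
  have hcont {q : ℝ} (hq : 0 < q) : ContinuousOn (fun t : ℝ ↦ t ^ q) (Set.Ici 0) :=
    (Real.continuous_rpow_const hq.le).continuousOn
  have hderiv (q : ℝ) : ∀ t ∈ interior (Set.Ici (0 : ℝ)),
      HasDerivWithinAt (fun t : ℝ ↦ t ^ q) (q * t ^ (q - 1)) (interior (Set.Ici 0)) t := by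
    intro t ht
    rw [interior_Ici] at ht
    exact (Real.hasDerivAt_rpow_const (Or.inl (ne_of_gt ht))).hasDerivWithinAt
  have hsq_deriv : ∀ t ∈ interior (Set.Ici (0 : ℝ)), (p / 2 * t ^ (p / 2 - 1)) ^ 2 ≤
      p ^ 2 / (4 * (p - 1)) * ((p - 1) * t ^ (p - 1 - 1)) := by
    intro t ht
    rw [interior_Ici] at ht
    rw [mul_pow, sq_rpow (le_of_lt ht), show 2 * (p / 2 - 1) = p - 1 - 1 by ring]
    apply le_of_eq
    field_simp
    ring
  have hcauchy := sq_sub_le_mul_sub_of_sq_hasDerivWithinAt_le (convex_Ici 0)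
    (hcont (by linarith)) ((hcont hp₁).const_mul _) (hderiv (p / 2))
    (fun t ht ↦ (hderiv (p - 1) t ht).const_mul (p ^ 2 / (4 * (p - 1)))) hsq_deriv ha hb
  calc 4 * (p - 1) / p ^ 2 * (a ^ (p / 2) - b ^ (p / 2)) ^ 2
      ≤ 4 * (p - 1) / p ^ 2 * ((p ^ 2 / (4 * (p - 1)) * a ^ (p - 1) -
          p ^ 2 / (4 * (p - 1)) * b ^ (p - 1)) * (a - b)) := by gcongr
    _ = (a ^ (p - 1) - b ^ (p - 1)) * (a - b) := by field_simp

theorem sq_rpow_add_rpow_le (hp : p ≠ 0) (ha : 0 ≤ a) (hb : 0 ≤ b) :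
    (a ^ (p / 2) + b ^ (p / 2)) ^ 2 ≤ (a ^ (p - 1) + b ^ (p - 1)) * (a + b) := by
  have hsq {t : ℝ} (ht : 0 ≤ t) : (t ^ (p / 2)) ^ 2 = t ^ (p - 1) * t := by
    rw [sq_rpow ht, ← Real.rpow_add_one' ht (by simpa using hp)]
    ring_nf
  simpa [Fin.sum_univ_two] using Finset.sum_sq_le_sum_mul_sum_of_sq_le_mul Finset.univ
    (r := ![a ^ (p / 2), b ^ (p / 2)]) (f := ![a ^ (p - 1), b ^ (p - 1)]) (g := ![a, b])
    (by simp [Fin.forall_fin_two, Real.rpow_nonneg, ha, hb])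
    (by simp [Fin.forall_fin_two, ha, hb]) (by simp [Fin.forall_fin_two, hsq, ha, hb])

theorem four_mul_sub_one_div_sq_le_one (p : ℝ) : 4 * (p - 1) / p ^ 2 ≤ 1 :=
  div_le_one_of_le₀ (by nlinarith [sq_nonneg (p - 2)]) (sq_nonneg p)

theorem four_mul_sub_one_div_sq_mul_sq_rpow_add_le (hp : p ≠ 0) (ha : 0 ≤ a) (hb : 0 ≤ b) :
    4 * (p - 1) / p ^ 2 * (a ^ (p / 2) + b ^ (p / 2)) ^ 2 ≤
      (a ^ (p - 1) + b ^ (p - 1)) * (a + b) :=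
  (mul_le_of_le_one_left (sq_nonneg _) (four_mul_sub_one_div_sq_le_one p)).trans
    (sq_rpow_add_rpow_le hp ha hb)

theorem mul_max_sub_max_le {φ : ℝ → ℝ} (hφ : MonotoneOn φ (Set.Ici 0)) (δ r s : ℝ) :
    (φ (max (r - δ) 0) - φ (max (s - δ) 0)) * (max (r - δ) 0 - max (s - δ) 0) ≤
      (φ (max (r - δ) 0) - φ (max (s - δ) 0)) * (r - s) := by
  wlog hsr : s ≤ r generalizing r s
  · linarith [this s r (le_of_not_ge hsr)]
  have hφ_le : φ (max (s - δ) 0) ≤ φ (max (r - δ) 0) :=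
    hφ (Set.mem_Ici.2 (le_max_right _ _)) (Set.mem_Ici.2 (le_max_right _ _)) (by gcongr)
  have hmax_sub : max (r - δ) 0 - max (s - δ) 0 ≤ r - s := by
    simpa [hsr] using max_sub_max_le_max (r - δ) 0 (s - δ) 0
  exact mul_le_mul_of_nonneg_left hmax_sub (sub_nonneg.2 hφ_le)

end RealInequalities

section RadialMap

variable {E : Type*} [NormedAddCommGroup E] [InnerProductSpace ℝ E]

/-- The radial map `ξ ↦ f(|ξ|) ξ/|ξ|` with profile `f`. Since `NormedSpace.normalize 0 = 0`, it
vanishes at the origin whatever the value `f 0`. -/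
noncomputable def radialMap (f : ℝ → ℝ) (ξ : E) : E :=
  f ‖ξ‖ • NormedSpace.normalize ξ

theorem norm_normalize_le_one (ξ : E) : ‖NormedSpace.normalize ξ‖ ≤ 1 := by
  rcases eq_or_ne ξ 0 with rfl | hξ
  · simp
  · exact (NormedSpace.norm_normalize hξ).le

theorem abs_inner_normalize_le_one (ξ η : E) :
    |⟪NormedSpace.normalize ξ, NormedSpace.normalize η⟫| ≤ 1 :=
  (abs_real_inner_le_norm _ _).trans <|
    mul_le_one₀ (norm_normalize_le_one ξ) (norm_nonneg _) (norm_normalize_le_one η)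

theorem norm_radialMap_le (f : ℝ → ℝ) (ξ : E) : ‖radialMap f ξ‖ ≤ |f ‖ξ‖| := by
  rw [radialMap, norm_smul, Real.norm_eq_abs]
  exact mul_le_of_le_one_right (abs_nonneg _) (norm_normalize_le_one ξ)

theorem inner_radialMap_self (g : ℝ → ℝ) (ξ : E) : ⟪radialMap g ξ, ξ⟫ = g ‖ξ‖ * ‖ξ‖ := by
  rcases eq_or_ne ξ 0 with rfl | hξ
  · simp
  · rw [radialMap, NormedSpace.normalize, real_inner_smul_left, real_inner_smul_left,
      real_inner_self_eq_norm_sq, sq, inv_mul_cancel_left₀ (norm_ne_zero_iff.2 hξ)]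

theorem inner_radialMap_radialMap (f g : ℝ → ℝ) (ξ η : E) :
    ⟪radialMap f ξ, radialMap g η⟫ =
      ⟪NormedSpace.normalize ξ, NormedSpace.normalize η⟫ * (f ‖ξ‖ * g ‖η‖) := by
  rw [radialMap, radialMap, real_inner_smul_left, real_inner_smul_right]
  ring

theorem radialMap_id (ξ : E) : radialMap id ξ = ξ :=
  NormedSpace.norm_smul_normalize ξ

theorem norm_radialMap_sub_sq_le (f : ℝ → ℝ) (ξ η : E) :
    ‖radialMap f ξ - radialMap f η‖ ^ 2 ≤ f ‖ξ‖ ^ 2 + f ‖η‖ ^ 2 -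
      2 * ⟪NormedSpace.normalize ξ, NormedSpace.normalize η⟫ * (f ‖ξ‖ * f ‖η‖) := by
  have hξ : ‖radialMap f ξ‖ ^ 2 ≤ f ‖ξ‖ ^ 2 :=
    sq_le_sq.2 (by simpa using norm_radialMap_le f ξ)
  have hη : ‖radialMap f η‖ ^ 2 ≤ f ‖η‖ ^ 2 :=
    sq_le_sq.2 (by simpa using norm_radialMap_le f η)
  rw [norm_sub_sq_real, inner_radialMap_radialMap]
  linarith

theorem inner_radialMap_sub_sub (g : ℝ → ℝ) (ξ η : E) :
    ⟪radialMap g ξ - radialMap g η, ξ - η⟫ = g ‖ξ‖ * ‖ξ‖ + g ‖η‖ * ‖η‖ -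
      ⟪NormedSpace.normalize ξ, NormedSpace.normalize η⟫ * (g ‖ξ‖ * ‖η‖ + g ‖η‖ * ‖ξ‖) := by
  have hcross (ξ η : E) : ⟪radialMap g ξ, η⟫ =
      ⟪NormedSpace.normalize ξ, NormedSpace.normalize η⟫ * (g ‖ξ‖ * ‖η‖) := by
    simpa only [radialMap_id, id] using inner_radialMap_radialMap g id ξ η
  rw [inner_sub_left, inner_sub_right, inner_sub_right, inner_radialMap_self,
    inner_radialMap_self, hcross ξ η, hcross η ξ, real_inner_comm]
  ring

theorem mul_norm_radialMap_sub_sq_le_inner {k : ℝ} (hk : 0 ≤ k) {f g : ℝ → ℝ} {ξ η : E}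
    (hsub : k * (f ‖ξ‖ - f ‖η‖) ^ 2 ≤ (g ‖ξ‖ - g ‖η‖) * (‖ξ‖ - ‖η‖))
    (hadd : k * (f ‖ξ‖ + f ‖η‖) ^ 2 ≤ (g ‖ξ‖ + g ‖η‖) * (‖ξ‖ + ‖η‖)) :
    k * ‖radialMap f ξ - radialMap f η‖ ^ 2 ≤ ⟪radialMap g ξ - radialMap g η, ξ - η⟫ := by
  have hnorm := norm_radialMap_sub_sq_le f ξ η
  have hinner := inner_radialMap_sub_sub g ξ η
  obtain ⟨hc_ge, hc_le⟩ := abs_le.1 (abs_inner_normalize_le_one ξ η)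
  set c := ⟪NormedSpace.normalize ξ, NormedSpace.normalize η⟫
  have hplus : 0 ≤ (1 + c) / 2 := by linarith
  have hminus : 0 ≤ (1 - c) / 2 := by linarith
  calc k * ‖radialMap f ξ - radialMap f η‖ ^ 2
      ≤ k * (f ‖ξ‖ ^ 2 + f ‖η‖ ^ 2 - 2 * c * (f ‖ξ‖ * f ‖η‖)) := by gcongr
    _ = (1 + c) / 2 * (k * (f ‖ξ‖ - f ‖η‖) ^ 2) +
          (1 - c) / 2 * (k * (f ‖ξ‖ + f ‖η‖) ^ 2) := by ring
    _ ≤ (1 + c) / 2 * ((g ‖ξ‖ - g ‖η‖) * (‖ξ‖ - ‖η‖)) +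
          (1 - c) / 2 * ((g ‖ξ‖ + g ‖η‖) * (‖ξ‖ + ‖η‖)) :=
        add_le_add (mul_le_mul_of_nonneg_left hsub hplus) (mul_le_mul_of_nonneg_left hadd hminus)
    _ = ⟪radialMap g ξ - radialMap g η, ξ - η⟫ := by rw [hinner]; ring

theorem monotonicity_of_Hmap_general {δ p : ℝ} (hδ : 0 ≤ δ) (hp : 1 < p) (ξ η : E) :
    4 * (p - 1) / p ^ 2 * ‖radialMap (fun r ↦ max (r - δ) 0 ^ (p / 2)) ξ -
        radialMap (fun r ↦ max (r - δ) 0 ^ (p / 2)) η‖ ^ 2 ≤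
      ⟪radialMap (fun r ↦ max (r - δ) 0 ^ (p - 1)) ξ -
        radialMap (fun r ↦ max (r - δ) 0 ^ (p - 1)) η, ξ - η⟫ := by
  have hp₁ : 0 < p - 1 := sub_pos.2 hp
  have hpos (r : ℝ) : 0 ≤ max (r - δ) 0 := le_max_right _ _
  have hmax_le (ζ : E) : max (‖ζ‖ - δ) 0 ≤ ‖ζ‖ := max_le (sub_le_self _ hδ) (norm_nonneg ζ)
  refine mul_norm_radialMap_sub_sq_le_inner (by positivity) ?_ ?_
  · exact (four_mul_sub_one_div_sq_mul_sq_rpow_sub_le hp (hpos _) (hpos _)).trans <|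
      mul_max_sub_max_le (Real.monotoneOn_rpow_Ici_of_exponent_nonneg hp₁.le) δ ‖ξ‖ ‖η‖
  · refine (four_mul_sub_one_div_sq_mul_sq_rpow_add_le (by positivity) (hpos _) (hpos _)).trans ?_
    exact mul_le_mul_of_nonneg_left (add_le_add (hmax_le ξ) (hmax_le η)) (by positivity)

end RadialMap

theorem Hmap_eq_radialMap {n : ℕ} (lam : ℝ) (ξ : EuclideanSpace ℝ (Fin n)) :
    Hmap lam ξ = radialMap (fun r ↦ max (r - 1) 0 ^ lam) ξ := by
  unfold Hmap radialMap NormedSpace.normalize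
  split_ifs with hξ
  · simp only [hξ, smul_zero]
  · rfl

/-- for `2 ≤ p`,
`⟨H_{p−1}(ξ) − H_{p−1}(η), ξ − η⟩ ≥ (4/p²) ‖H_{p/2}(ξ) − H_{p/2}(η)‖²`. -/
theorem monotonicity_of_Hmap {n : ℕ} (p : ℝ) (hp : 2 ≤ p)
    (ξ η : EuclideanSpace ℝ (Fin n)) :
    ⟪Hmap (p - 1) ξ - Hmap (p - 1) η, ξ - η⟫ ≥
      4 / p ^ 2 * ‖Hmap (p / 2) ξ - Hmap (p / 2) η‖ ^ 2 := by
  simp only [Hmap_eq_radialMap]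
  refine le_trans ?_ (monotonicity_of_Hmap_general zero_le_one (by linarith) ξ η)
  gcongr
  linarith
end

section
/- Let 2 ≤ p < ∞. Then for every ξ, η ∈ ℝⁿ it holds that |H_{p−1}(ξ) − H_{p−1}(η)| ≤ (p−1) ( |H_{p/2}(ξ)|^{(p−2)/p} + |H_{p/2}(η)|^{(p−2)/p} ) |H_{p/2}(ξ) − H_{p/2}(η)|. -/
/-!
The exponent enters `Hmap` only through the length, so `Hmap lam ξ = ‖X‖ ^ t • X` with
`X = Hmap μ ξ` and `t = (lam - μ) / μ`, and the estimate reduces to one for the map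
`x ↦ ‖x‖ ^ t • x`. For `‖y‖ ≤ ‖x‖`, write
`‖x‖ ^ t • x - ‖y‖ ^ t • y = ‖x‖ ^ t • (x - y) + (‖x‖ ^ t - ‖y‖ ^ t) • y`. When `0 ≤ t ≤ 1`, the
function `r ↦ r ^ t / r` is nonincreasing, so the last term has norm at most
`‖y‖ ^ t * (‖x‖ - ‖y‖) ≤ ‖y‖ ^ t * ‖x - y‖`. This gives the constant `1`, which is at most `p - 1`.
-/

lemma rpow_mul_le_rpow_mul_of_le {r s t : ℝ} (hr : 0 ≤ r) (hrs : r ≤ s) (ht : t ≤ 1) :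
    s ^ t * r ≤ r ^ t * s := by
  have eq_mul_rpow {x : ℝ} (hx : 0 ≤ x) : x = x ^ (1 - t) * x ^ t := by
    rw [← Real.rpow_add' hx (by simp), sub_add_cancel, Real.rpow_one]
  have hs : 0 ≤ s := hr.trans hrs
  calc
    s ^ t * r = r ^ (1 - t) * (r ^ t * s ^ t) := by
      rw [← mul_assoc, ← eq_mul_rpow hr, mul_comm]
    _ ≤ s ^ (1 - t) * (r ^ t * s ^ t) := by
      gcongr
    _ = r ^ t * s := by
      rw [mul_left_comm, ← eq_mul_rpow hs]

section NormedSpace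

variable {E : Type*} [NormedAddCommGroup E] [NormedSpace ℝ E]

lemma norm_smul_sub_smul_le {a b : ℝ} {x y : E} (hb : 0 ≤ b) (hba : b ≤ a)
    (hxy : a * ‖y‖ ≤ b * ‖x‖) : ‖a • x - b • y‖ ≤ (a + b) * ‖x - y‖ := by
  have ha : 0 ≤ a := hb.trans hba
  have hy : (a - b) * ‖y‖ ≤ b * ‖x - y‖ :=
    calc
      (a - b) * ‖y‖ ≤ b * (‖x‖ - ‖y‖) := by linarith
      _ ≤ b * ‖x - y‖ := by
        gcongr
        exact norm_sub_norm_le x y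
  calc
    ‖a • x - b • y‖ = ‖a • (x - y) + (a - b) • y‖ := by
      congr 1
      module
    _ ≤ ‖a • (x - y)‖ + ‖(a - b) • y‖ := norm_add_le _ _
    _ = a * ‖x - y‖ + (a - b) * ‖y‖ := by
      rw [norm_smul_of_nonneg ha, norm_smul_of_nonneg (sub_nonneg.mpr hba)]
    _ ≤ (a + b) * ‖x - y‖ := by linarith

lemma norm_rpow_smul_sub_rpow_smul_le {t : ℝ} (ht₀ : 0 ≤ t) (ht₁ : t ≤ 1) (x y : E) :
    ‖‖x‖ ^ t • x - ‖y‖ ^ t • y‖ ≤ (‖x‖ ^ t + ‖y‖ ^ t) * ‖x - y‖ := by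
  wlog h : ‖y‖ ≤ ‖x‖ generalizing x y
  · simpa only [norm_sub_rev, add_comm] using this y x (le_of_not_ge h)
  · exact norm_smul_sub_smul_le (by positivity) (by gcongr)
      (rpow_mul_le_rpow_mul_of_le (norm_nonneg y) h ht₁)

end NormedSpace

section Hmap

variable {n : ℕ} {lam μ : ℝ}

lemma Hmap_eq_smul (lam : ℝ) (ξ : EuclideanSpace ℝ (Fin n)) :
    Hmap lam ξ = (max (‖ξ‖ - 1) 0) ^ lam • ‖ξ‖⁻¹ • ξ := by
  rw [Hmap, ite_eq_right_iff]
  rintro rfl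
  simp only [smul_zero]

lemma norm_Hmap (hlam : lam ≠ 0) (ξ : EuclideanSpace ℝ (Fin n)) :
    ‖Hmap lam ξ‖ = (max (‖ξ‖ - 1) 0) ^ lam := by
  rcases eq_or_ne ξ 0 with rfl | hξ
  · simp [Hmap, hlam]
  · rw [Hmap_eq_smul, norm_smul_of_nonneg (by positivity), norm_smul, norm_inv, norm_norm,
      inv_mul_cancel₀ (norm_ne_zero_iff.mpr hξ), mul_one]

lemma Hmap_eq_norm_rpow_smul_Hmap (hlam : lam ≠ 0) (hμ : μ ≠ 0)
    (ξ : EuclideanSpace ℝ (Fin n)) :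
    Hmap lam ξ = ‖Hmap μ ξ‖ ^ ((lam - μ) / μ) • Hmap μ ξ := by
  have hr : 0 ≤ max (‖ξ‖ - 1) 0 := le_max_right _ _
  rw [norm_Hmap hμ, ← Real.rpow_mul hr, mul_div_cancel₀ _ hμ, Hmap_eq_smul μ, smul_smul,
    ← Real.rpow_add' hr (by rwa [sub_add_cancel]), sub_add_cancel, Hmap_eq_smul]

theorem lipschitz_estimate_for_Hmap_general (hμ : 0 < μ) (hμlam : μ ≤ lam) (hlam : lam ≤ 2 * μ)
    (ξ η : EuclideanSpace ℝ (Fin n)) :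
    ‖Hmap lam ξ - Hmap lam η‖ ≤
      (‖Hmap μ ξ‖ ^ ((lam - μ) / μ) + ‖Hmap μ η‖ ^ ((lam - μ) / μ)) *
        ‖Hmap μ ξ - Hmap μ η‖ := by
  have hlam₀ : lam ≠ 0 := (hμ.trans_le hμlam).ne'
  have ht₀ : 0 ≤ (lam - μ) / μ := div_nonneg (sub_nonneg.mpr hμlam) hμ.le
  have ht₁ : (lam - μ) / μ ≤ 1 := (div_le_one hμ).mpr (by linarith)
  rw [Hmap_eq_norm_rpow_smul_Hmap hlam₀ hμ.ne' ξ, Hmap_eq_norm_rpow_smul_Hmap hlam₀ hμ.ne' η]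
  exact norm_rpow_smul_sub_rpow_smul_le ht₀ ht₁ _ _

end Hmap

/-- for `2 ≤ p`,
`|H_{p−1}(ξ) − H_{p−1}(η)| ≤ (p−1)(|H_{p/2}(ξ)|^{(p−2)/p} + |H_{p/2}(η)|^{(p−2)/p}) |H_{p/2}(ξ) − H_{p/2}(η)|`. -/
theorem lipschitz_estimate_for_Hmap {n : ℕ} (p : ℝ) (hp : 2 ≤ p)
    (ξ η : EuclideanSpace ℝ (Fin n)) :
    ‖Hmap (p - 1) ξ - Hmap (p - 1) η‖ ≤
      (p - 1) * (‖Hmap (p / 2) ξ‖ ^ ((p - 2) / p) + ‖Hmap (p / 2) η‖ ^ ((p - 2) / p)) *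
        ‖Hmap (p / 2) ξ - Hmap (p / 2) η‖ := by
  have ht : (p - 2) / p = (p - 1 - p / 2) / (p / 2) := by
    field_simp
    ring
  rw [ht, mul_assoc]
  exact (lipschitz_estimate_for_Hmap_general (by linarith) (by linarith) (by linarith) ξ η).trans
    (le_mul_of_one_le_left (by positivity) (by linarith))
end

section
/- Let p ≥ 2, δ ∈ (0,1), and let ξ, η ∈ ℝⁿ with |ξ| > 1 + δ and |η| ≤ |ξ|. Then 𝒢_δ(|ξ| − 1 − δ) − 𝒢_δ((|η| − 1 − δ)_+) ≤ (2/p) [ (|ξ| − 1)^{p/2} − ( (|η| − δ − 1)_+ + δ )^{p/2} ]. -/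
/-- `Gfun p δ t = ∫₀ᵗ s(s+δ)^{(p−2)/2}/√(1+δ+s²) ds`. -/
noncomputable def Gfun (p δ t : ℝ) : ℝ :=
  ∫ s in (0:ℝ)..t, s * (s + δ) ^ ((p - 2) / 2) / Real.sqrt (1 + δ + s ^ 2)

/-!
Since `s ≤ √(1 + δ + s²)`, the integrand of `𝒢_δ` is at most `(s + δ)^{(p−2)/2}`, which has the
antiderivative `(2/p) (s + δ)^{p/2}`. Integrating this comparison from `(|η| − 1 − δ)₊` to
`|ξ| − 1 − δ` gives the bound.
-/

theorem div_sqrt_add_sq_le_one {c : ℝ} (hc : 0 ≤ c) (s : ℝ) : s / √(c + s ^ 2) ≤ 1 :=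
  div_le_one_of_le₀ (Real.le_sqrt_of_sq_le (le_add_of_nonneg_left hc)) (Real.sqrt_nonneg _)

section

variable {p δ : ℝ}

theorem intervalIntegrable_add_rpow {r : ℝ} (hr : -1 < r) (δ a b : ℝ) :
    IntervalIntegrable (fun s ↦ (s + δ) ^ r) MeasureTheory.volume a b := by
  simpa only [add_sub_cancel_right] using
    (intervalIntegral.intervalIntegrable_rpow' (a := a + δ) (b := b + δ) hr).comp_add_right δ

theorem integral_add_rpow_half (hp : 0 < p) (δ a b : ℝ) :
    ∫ s in a..b, (s + δ) ^ ((p - 2) / 2) =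
      2 / p * ((b + δ) ^ (p / 2) - (a + δ) ^ (p / 2)) := by
  have exponent : (p - 2) / 2 + 1 = p / 2 := by ring
  rw [intervalIntegral.integral_comp_add_right (fun s ↦ s ^ ((p - 2) / 2)),
    integral_rpow (Or.inl (by linarith)), exponent]
  field_simp

theorem intervalIntegrable_Gfun_integrand (hp : 0 < p) (hδ : -1 < δ) (a b : ℝ) :
    IntervalIntegrable (fun s ↦ s * (s + δ) ^ ((p - 2) / 2) / √(1 + δ + s ^ 2))
      MeasureTheory.volume a b := by
  have sqrt_ne_zero (s : ℝ) : √(1 + δ + s ^ 2) ≠ 0 :=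
    (Real.sqrt_pos.2 (by linarith [sq_nonneg s])).ne'
  have factor_continuous : Continuous fun s : ℝ ↦ s / √(1 + δ + s ^ 2) :=
    continuous_id.div (by fun_prop) sqrt_ne_zero
  simpa only [div_mul_eq_mul_div] using
    (intervalIntegrable_add_rpow (by linarith) δ a b).continuousOn_mul
      factor_continuous.continuousOn

theorem Gfun_sub_Gfun (hp : 0 < p) (hδ : -1 < δ) (a b : ℝ) :
    Gfun p δ b - Gfun p δ a =
      ∫ s in a..b, s * (s + δ) ^ ((p - 2) / 2) / √(1 + δ + s ^ 2) :=
  intervalIntegral.integral_interval_sub_left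
    (intervalIntegrable_Gfun_integrand hp hδ 0 b) (intervalIntegrable_Gfun_integrand hp hδ 0 a)

theorem Gfun_integrand_le (p : ℝ) {s : ℝ} (hδ : -1 ≤ δ) (hs : 0 ≤ s + δ) :
    s * (s + δ) ^ ((p - 2) / 2) / √(1 + δ + s ^ 2) ≤ (s + δ) ^ ((p - 2) / 2) := by
  rw [← div_mul_eq_mul_div]
  exact mul_le_of_le_one_left (Real.rpow_nonneg hs _) (div_sqrt_add_sq_le_one (by linarith) s)

theorem Gfun_sub_Gfun_le (hp : 0 < p) (hδ : -1 < δ) {a b : ℝ} (ha : 0 ≤ a + δ) (hab : a ≤ b) :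
    Gfun p δ b - Gfun p δ a ≤ 2 / p * ((b + δ) ^ (p / 2) - (a + δ) ^ (p / 2)) :=
  calc
    Gfun p δ b - Gfun p δ a
        = ∫ s in a..b, s * (s + δ) ^ ((p - 2) / 2) / √(1 + δ + s ^ 2) := Gfun_sub_Gfun hp hδ a b
    _ ≤ ∫ s in a..b, (s + δ) ^ ((p - 2) / 2) :=
        intervalIntegral.integral_mono_on hab (intervalIntegrable_Gfun_integrand hp hδ a b)
          (intervalIntegrable_add_rpow (by linarith) δ a b)
          fun s hs ↦ Gfun_integrand_le p hδ.le (by linarith [hs.1])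
    _ = 2 / p * ((b + δ) ^ (p / 2) - (a + δ) ^ (p / 2)) := integral_add_rpow_half hp δ a b

theorem Gfun_difference_bound_general (hp : 0 < p) (hδ : 0 ≤ δ) {x y : ℝ} (hx : 1 + δ ≤ x)
    (hyx : y ≤ x) :
    Gfun p δ (x - 1 - δ) - Gfun p δ (max (y - 1 - δ) 0) ≤
      2 / p * ((x - 1) ^ (p / 2) - (max (y - δ - 1) 0 + δ) ^ (p / 2)) := by
  have lower_nonneg : 0 ≤ max (y - 1 - δ) 0 + δ := add_nonneg (le_max_right _ _) hδ
  have lower_le_upper : max (y - 1 - δ) 0 ≤ x - 1 - δ := max_le (by linarith) (by linarith)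
  simpa only [sub_add_cancel, sub_right_comm y δ 1] using
    Gfun_sub_Gfun_le hp (by linarith) lower_nonneg lower_le_upper

end

/-- for `p ≥ 2`, `δ ∈ (0,1)` and `ξ, η ∈ ℝⁿ` with `|ξ| > 1+δ`, `|η| ≤ |ξ|`:
`𝒢_δ(|ξ|−1−δ) − 𝒢_δ((|η|−1−δ)₊) ≤ (2/p)[(|ξ|−1)^{p/2} − ((|η|−δ−1)₊+δ)^{p/2}]`. -/
theorem Gfun_difference_bound {n : ℕ} (p : ℝ) (hp : 2 ≤ p)
    (δ : ℝ) (hδ0 : 0 < δ) (hδ1 : δ < 1)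
    (ξ η : EuclideanSpace ℝ (Fin n)) (hξ : 1 + δ < ‖ξ‖) (hη : ‖η‖ ≤ ‖ξ‖) :
    Gfun p δ (‖ξ‖ - 1 - δ) - Gfun p δ (max (‖η‖ - 1 - δ) 0) ≤
      2 / p * ((‖ξ‖ - 1) ^ (p / 2) - (max (‖η‖ - δ - 1) 0 + δ) ^ (p / 2)) :=
  Gfun_difference_bound_general (by linarith) hδ0.le hξ.le hη
end

section
/- Let p > 2 and 0 < δ ≤ 1. Then for every t ≥ 0: ∫₀^t s(s+δ)^{(p−2)/2}/(√(1+δ) + s) ds ≥ (2/p)(t+δ)^{p/2} − (2√(1+δ)/(p−2))(t+δ)^{p/2−1} + (2√(1+δ)/(p−2)) δ^{p/2−1} − (2/p) δ^{p/2}; moreover, since √(1+δ+s²) ≤ √(1+δ) + s for s ≥ 0, the same lower bound holds for 𝒢_δ(t) = ∫₀^t s(s+δ)^{(p−2)/2}/√(1+δ+s²) ds. -/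
/-!
With `c = √(1+δ)`, the integrand with denominator `c + s` splits exactly as
`s(s+δ)^r/(c+s) = (s+δ)^r - c(s+δ)^(r-1) + c(c-δ)(s+δ)^(r-1)/(c+s)`, where `r = p/2 - 1`. The last
term is nonnegative as soon as `δ ≤ c`, that is `δ² ≤ 1 + δ`, and the first two integrate in closed
form to the claimed bound. Since `√(c²+s²) ≤ c + s`, the bound passes on to `𝒢_δ`.
-/

open MeasureTheory Set

section AddRpow

variable {a b c d r s t : ℝ}

theorem sqrt_add_sq_le_sqrt_add (hs : 0 ≤ s) : √(a + s ^ 2) ≤ √a + s := by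
  have ha : a ≤ √a ^ 2 := (Real.sqrt_le_left (Real.sqrt_nonneg a)).1 le_rfl
  rw [Real.sqrt_le_left (by positivity), add_sq]
  linarith [mul_nonneg (Real.sqrt_nonneg a) hs]

theorem continuousOn_add_rpow {S : Set ℝ} (h : ∀ s ∈ S, s + d ≠ 0) :
    ContinuousOn (fun s : ℝ ↦ (s + d) ^ r) S :=
  (continuousOn_id.add continuousOn_const).rpow_const fun s hs ↦ Or.inl (h s hs)

theorem integral_add_rpow (h : -1 < r ∨ r ≠ -1 ∧ (0 : ℝ) ∉ uIcc (a + d) (b + d)) :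
    ∫ s in a..b, (s + d) ^ r = ((b + d) ^ (r + 1) - (a + d) ^ (r + 1)) / (r + 1) := by
  rw [intervalIntegral.integral_comp_add_right (fun x ↦ x ^ r), integral_rpow h]

theorem intervalIntegrable_mul_add_rpow_div {w : ℝ → ℝ} (hd : ∀ s ∈ uIcc a b, s + d ≠ 0)
    (hw : ContinuousOn w (uIcc a b)) (hw0 : ∀ s ∈ uIcc a b, w s ≠ 0) :
    IntervalIntegrable (fun s ↦ s * (s + d) ^ r / w s) volume a b :=
  ((continuousOn_id.mul (continuousOn_add_rpow hd)).div hw hw0).intervalIntegrable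

theorem integral_mul_add_rpow_div_anti {v w : ℝ → ℝ} (ha : 0 ≤ a) (hab : a ≤ b) (had : 0 < a + d)
    (hv : ContinuousOn v (Icc a b)) (hw : ContinuousOn w (Icc a b))
    (hv0 : ∀ s ∈ Icc a b, 0 < v s) (hvw : ∀ s ∈ Icc a b, v s ≤ w s) :
    ∫ s in a..b, s * (s + d) ^ r / w s ≤ ∫ s in a..b, s * (s + d) ^ r / v s := by
  have hpos : ∀ s ∈ Icc a b, 0 < s + d := fun s hs ↦ by linarith [hs.1]
  have integrable {u : ℝ → ℝ} (hu : ContinuousOn u (Icc a b)) (hu0 : ∀ s ∈ Icc a b, 0 < u s) :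
      IntervalIntegrable (fun s ↦ s * (s + d) ^ r / u s) volume a b := by
    rw [← uIcc_of_le hab] at hpos hu hu0
    exact intervalIntegrable_mul_add_rpow_div (fun s hs ↦ (hpos s hs).ne') hu
      fun s hs ↦ (hu0 s hs).ne'
  refine intervalIntegral.integral_mono_on hab
    (integrable hw fun s hs ↦ (hv0 s hs).trans_le (hvw s hs)) (integrable hv hv0) fun s hs ↦ ?_
  have hnum : 0 ≤ s * (s + d) ^ r :=
    mul_nonneg (ha.trans hs.1) (Real.rpow_nonneg (hpos s hs).le r)
  exact div_le_div_of_nonneg_left hnum (hv0 s hs) (hvw s hs)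

theorem mul_add_rpow_div_eq (hsd : s + d ≠ 0) (hcs : c + s ≠ 0) :
    s * (s + d) ^ r / (c + s) = (s + d) ^ r - c * (s + d) ^ (r - 1)
      + c * (c - d) * (s + d) ^ (r - 1) / (c + s) := by
  have hpow : (s + d) ^ r = (s + d) ^ (r - 1) * (s + d) := by
    rw [Real.rpow_sub_one hsd, div_mul_cancel₀ _ hsd]
  rw [hpow]
  field_simp
  ring

theorem add_rpow_sub_le_mul_add_rpow_div (hc : 0 ≤ c) (hdc : d ≤ c) (hsd : 0 < s + d) :
    (s + d) ^ r - c * (s + d) ^ (r - 1) ≤ s * (s + d) ^ r / (c + s) := by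
  have hcs : 0 < c + s := by linarith
  have hremainder : 0 ≤ c * (c - d) * (s + d) ^ (r - 1) / (c + s) :=
    div_nonneg (mul_nonneg (mul_nonneg hc (sub_nonneg.2 hdc)) (Real.rpow_nonneg hsd.le _)) hcs.le
  rw [mul_add_rpow_div_eq hsd.ne' hcs.ne']
  exact le_add_of_nonneg_right hremainder

theorem le_integral_mul_add_rpow_div (hr0 : r ≠ 0) (hr1 : r ≠ -1) (hc : 0 ≤ c) (hdc : d ≤ c)
    (hab : a ≤ b) (had : 0 < a + d) :
    ((b + d) ^ (r + 1) - (a + d) ^ (r + 1)) / (r + 1) - c * (((b + d) ^ r - (a + d) ^ r) / r) ≤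
      ∫ s in a..b, s * (s + d) ^ r / (c + s) := by
  have hpos : ∀ s ∈ uIcc a b, 0 < s + d := fun s hs ↦ by
    rw [uIcc_of_le hab] at hs
    linarith [hs.1]
  have hzero : (0 : ℝ) ∉ uIcc (a + d) (b + d) :=
    notMem_uIcc_of_lt had (by linarith)
  have integrable (q : ℝ) : IntervalIntegrable (fun s ↦ (s + d) ^ q) volume a b :=
    (continuousOn_add_rpow fun s hs ↦ (hpos s hs).ne').intervalIntegrable
  have integrable_quotient : IntervalIntegrable (fun s ↦ s * (s + d) ^ r / (c + s)) volume a b :=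
    intervalIntegrable_mul_add_rpow_div (fun s hs ↦ (hpos s hs).ne') (by fun_prop)
      fun s hs ↦ ne_of_gt (by linarith [hpos s hs])
  calc
    _ = ∫ s in a..b, ((s + d) ^ r - c * (s + d) ^ (r - 1)) := by
      rw [intervalIntegral.integral_sub (integrable r) ((integrable (r - 1)).const_mul c),
        intervalIntegral.integral_const_mul, integral_add_rpow (.inr ⟨hr1, hzero⟩),
        integral_add_rpow (.inr ⟨by simpa [sub_eq_iff_eq_add] using hr0, hzero⟩), sub_add_cancel]
    _ ≤ ∫ s in a..b, s * (s + d) ^ r / (c + s) :=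
      intervalIntegral.integral_mono_on hab
        ((integrable r).sub ((integrable (r - 1)).const_mul c)) integrable_quotient fun s hs ↦
          add_rpow_sub_le_mul_add_rpow_div hc hdc (hpos s (Icc_subset_uIcc hs))

theorem integral_mul_add_rpow_div_le_Gfun (p : ℝ) {δ : ℝ} (hδ : 0 < δ) (ht : 0 ≤ t) :
    ∫ s in (0 : ℝ)..t, s * (s + δ) ^ ((p - 2) / 2) / (√(1 + δ) + s) ≤ Gfun p δ t :=
  integral_mul_add_rpow_div_anti le_rfl ht (by simpa using hδ) (by fun_prop) (by fun_prop)
    (fun s _ ↦ by positivity) fun _ hs ↦ sqrt_add_sq_le_sqrt_add hs.1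

end AddRpow

theorem Gfun_lower_bound_general {p δ t : ℝ} (hp0 : p ≠ 0) (hp2 : p ≠ 2) (hδ : 0 < δ)
    (hδ2 : δ ^ 2 ≤ 1 + δ) (ht : 0 ≤ t) :
    (2 / p * (t + δ) ^ (p / 2) - 2 * √(1 + δ) / (p - 2) * (t + δ) ^ (p / 2 - 1)
        + 2 * √(1 + δ) / (p - 2) * δ ^ (p / 2 - 1) - 2 / p * δ ^ (p / 2) ≤
      ∫ s in (0 : ℝ)..t, s * (s + δ) ^ ((p - 2) / 2) / (√(1 + δ) + s)) ∧
    (∀ s : ℝ, 0 ≤ s → √(1 + δ + s ^ 2) ≤ √(1 + δ) + s) ∧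
    (2 / p * (t + δ) ^ (p / 2) - 2 * √(1 + δ) / (p - 2) * (t + δ) ^ (p / 2 - 1)
        + 2 * √(1 + δ) / (p - 2) * δ ^ (p / 2 - 1) - 2 / p * δ ^ (p / 2) ≤
      Gfun p δ t) := by
  have hp2' : p - 2 ≠ 0 := sub_ne_zero.2 hp2
  have hr0 : p / 2 - 1 ≠ 0 := fun h ↦ hp2 (by linarith)
  have hr1 : p / 2 - 1 ≠ -1 := fun h ↦ hp0 (by linarith)
  have hbound := le_integral_mul_add_rpow_div hr0 hr1 (Real.sqrt_nonneg (1 + δ))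
    (Real.le_sqrt_of_sq_le hδ2) ht (by simpa using hδ)
  suffices hquotient : _ ≤ _ from ⟨hquotient, fun _ ↦ sqrt_add_sq_le_sqrt_add,
    hquotient.trans (integral_mul_add_rpow_div_le_Gfun p hδ ht)⟩
  have hr : (p - 2) / 2 = p / 2 - 1 := by ring
  rw [hr]
  refine le_of_eq_of_le ?_ hbound
  rw [sub_add_cancel, zero_add, ← hr]
  field_simp
  ring

/-- for `p > 2`, `0 < δ ≤ 1` and `t ≥ 0`:
`∫₀ᵗ s(s+δ)^{(p−2)/2}/(√(1+δ)+s) ds ≥ (2/p)(t+δ)^{p/2} − (2√(1+δ)/(p−2))(t+δ)^{p/2−1}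
  + (2√(1+δ)/(p−2))δ^{p/2−1} − (2/p)δ^{p/2}`;
moreover `√(1+δ+s²) ≤ √(1+δ)+s` for `s ≥ 0`, and the same lower bound holds for `𝒢_δ(t)`. -/
theorem Gfun_lower_bound (p : ℝ) (hp : 2 < p) (δ : ℝ) (hδ0 : 0 < δ) (hδ1 : δ ≤ 1)
    (t : ℝ) (ht : 0 ≤ t) :
    (2 / p * (t + δ) ^ (p / 2) - 2 * Real.sqrt (1 + δ) / (p - 2) * (t + δ) ^ (p / 2 - 1)
        + 2 * Real.sqrt (1 + δ) / (p - 2) * δ ^ (p / 2 - 1) - 2 / p * δ ^ (p / 2) ≤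
      ∫ s in (0:ℝ)..t, s * (s + δ) ^ ((p - 2) / 2) / (Real.sqrt (1 + δ) + s)) ∧
    (∀ s : ℝ, 0 ≤ s → Real.sqrt (1 + δ + s ^ 2) ≤ Real.sqrt (1 + δ) + s) ∧
    (2 / p * (t + δ) ^ (p / 2) - 2 * Real.sqrt (1 + δ) / (p - 2) * (t + δ) ^ (p / 2 - 1)
        + 2 * Real.sqrt (1 + δ) / (p - 2) * δ ^ (p / 2 - 1) - 2 / p * δ ^ (p / 2) ≤
      Gfun p δ t) :=
  Gfun_lower_bound_general (by linarith) hp.ne' hδ0 (by nlinarith) ht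
end

section
/- Let p ≥ 2 and 0 < δ < 1. Then there exists a constant c_p, depending only on p, such that for every s > 1 + δ: [𝒢_δ'(s − 1 − δ)]² = g_{1+δ}(s − 1 − δ) · (s − 1)^{p−2} ≤ (c_p/δ²) · g_{1+δ}((s² − 1 − δ)_+) · (s − 1)_+^p / s², where 𝒢_δ'(t) = t(t+δ)^{(p−2)/2}/√(1+δ+t²). -/
/-- `gk k s = s²/(k+s²)`. -/
noncomputable def gk (k s : ℝ) : ℝ := s ^ 2 / (k + s ^ 2)

/-- `Gfun' p δ t = t(t+δ)^{(p−2)/2}/√(1+δ+t²)`, the derivative of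
`𝒢_δ(t) = ∫₀ᵗ s(s+δ)^{(p−2)/2}/√(1+δ+s²) ds`. -/
noncomputable def Gfun' (p δ t : ℝ) : ℝ :=
  t * (t + δ) ^ ((p - 2) / 2) / Real.sqrt (1 + δ + t ^ 2)

/-!
The only loss comes from trading the factor `(s - 1) ^ (p - 2)` for `(s - 1) ^ p / s ^ 2`. Since
`s / (s - 1)` is decreasing, it is at most its value `(1 + δ) / δ` at `s = 1 + δ`, so the loss is
at most `(1 + δ) ^ 2 / δ ^ 2`. Everything else is monotonicity of `g_{1+δ}`, because `s ≤ s ^ 2`.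
-/

theorem gk_nonneg {k : ℝ} (hk : 0 ≤ k) (t : ℝ) : 0 ≤ gk k t := by
  unfold gk
  positivity

theorem gk_monotoneOn {k : ℝ} (hk : 0 < k) : MonotoneOn (gk k) (Set.Ici 0) := by
  intro a ha b _ hab
  have hsq : a ^ 2 ≤ b ^ 2 := pow_le_pow_left₀ ha hab 2
  unfold gk
  rw [div_le_div_iff₀ (by positivity) (by positivity)]
  linarith [mul_le_mul_of_nonneg_left hsq hk.le]

theorem Gfun'_sq (p : ℝ) {δ t : ℝ} (h : 0 ≤ t + δ) :
    Gfun' p δ t ^ 2 = gk (1 + δ) t * (t + δ) ^ (p - 2) := by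
  have hden : 0 ≤ 1 + δ + t ^ 2 := by linarith [sq_nonneg (t - 1), sq_nonneg t]
  have hpow : ((t + δ) ^ ((p - 2) / 2)) ^ 2 = (t + δ) ^ (p - 2) := by
    rw [← Real.rpow_mul_natCast h, Nat.cast_ofNat, div_mul_cancel₀ _ two_ne_zero]
  rw [Gfun', gk, div_pow, mul_pow, hpow, Real.sq_sqrt hden, mul_div_right_comm]

theorem sub_one_rpow_sub_two_le (p : ℝ) {δ s : ℝ} (hδ : 0 < δ) (hs : 1 + δ ≤ s) :
    (s - 1) ^ (p - 2) ≤ (1 + δ) ^ 2 / δ ^ 2 * ((s - 1) ^ p / s ^ 2) := by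
  have hs₁ : 0 < s - 1 := by linarith
  have hs₀ : 0 < s := by linarith
  have hratio : s / (s - 1) ≤ (1 + δ) / δ := by
    rw [div_le_div_iff₀ hs₁ hδ]
    linarith
  calc (s - 1) ^ (p - 2) = (s / (s - 1)) ^ 2 * ((s - 1) ^ p / s ^ 2) := by
        rw [Real.rpow_sub hs₁, Real.rpow_two]
        field_simp
    _ ≤ ((1 + δ) / δ) ^ 2 * ((s - 1) ^ p / s ^ 2) := by gcongr
    _ = (1 + δ) ^ 2 / δ ^ 2 * ((s - 1) ^ p / s ^ 2) := by rw [div_pow]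

theorem Gfun_derivative_estimate_general (p : ℝ) {δ s : ℝ} (hδ : 0 < δ) (hs : 1 + δ ≤ s) :
    (Gfun' p δ (s - 1 - δ)) ^ 2 = gk (1 + δ) (s - 1 - δ) * (s - 1) ^ (p - 2) ∧
      gk (1 + δ) (s - 1 - δ) * (s - 1) ^ (p - 2) ≤
        (1 + δ) ^ 2 / δ ^ 2 *
          (gk (1 + δ) (max (s ^ 2 - 1 - δ) 0) * (max (s - 1) 0) ^ p / s ^ 2) := by
  have hs₁ : 0 ≤ s - 1 := by linarith
  have hshift : 0 ≤ s - 1 - δ := by linarith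
  have hsq : s ≤ s ^ 2 := le_self_pow₀ (by linarith) two_ne_zero
  have hgk : gk (1 + δ) (s - 1 - δ) ≤ gk (1 + δ) (max (s ^ 2 - 1 - δ) 0) :=
    gk_monotoneOn (by positivity) hshift (Set.mem_Ici.2 (le_max_right _ _))
      (le_max_of_le_left (by linarith))
  refine ⟨by simpa only [sub_add_cancel] using Gfun'_sq p (add_nonneg hshift hδ.le), ?_⟩
  rw [max_eq_left hs₁]
  calc gk (1 + δ) (s - 1 - δ) * (s - 1) ^ (p - 2)
      ≤ gk (1 + δ) (max (s ^ 2 - 1 - δ) 0) *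
          ((1 + δ) ^ 2 / δ ^ 2 * ((s - 1) ^ p / s ^ 2)) :=
        mul_le_mul hgk (sub_one_rpow_sub_two_le p hδ hs) (by positivity)
          (gk_nonneg (by positivity) _)
    _ = _ := by ring

/-- for `p ≥ 2` there is `c_p`, depending only on `p`, such that for every
`δ ∈ (0,1)` and every `s > 1+δ`:
`[𝒢_δ'(s−1−δ)]² = g_{1+δ}(s−1−δ)·(s−1)^{p−2} ≤ (c_p/δ²)·g_{1+δ}((s²−1−δ)₊)·(s−1)₊^p/s²`. -/
theorem Gfun_derivative_estimate (p : ℝ) (hp : 2 ≤ p) :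
    ∃ c : ℝ, 0 < c ∧ ∀ δ : ℝ, 0 < δ → δ < 1 → ∀ s : ℝ, 1 + δ < s →
      (Gfun' p δ (s - 1 - δ)) ^ 2 = gk (1 + δ) (s - 1 - δ) * (s - 1) ^ (p - 2) ∧
      gk (1 + δ) (s - 1 - δ) * (s - 1) ^ (p - 2) ≤
        c / δ ^ 2 * (gk (1 + δ) (max (s ^ 2 - 1 - δ) 0) * (max (s - 1) 0) ^ p / s ^ 2) := by
  refine ⟨4, four_pos, fun δ hδ hδ₁ s hs =>
    (Gfun_derivative_estimate_general p hδ hs.le).imp_right (·.trans ?_)⟩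
  have hgk := gk_nonneg (k := 1 + δ) (by positivity) (max (s ^ 2 - 1 - δ) 0)
  gcongr
  nlinarith
end
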